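/- arXiv:1801.00419 — 5 statements merged into one kernel-verified Lean document; each statement's English description precedes it below -/
import Mathlib

section
/- Let τ_n be a topology on 𝒪^n(ℱ_n), let ℱ_{n+1} ⊆ 𝒫(𝒪^n(ℱ_n)), and let τ_{n+1} be the topology on 𝒪^{n+1}(ℱ_{n+1}) consisting of all ℍ ⊆ 𝒪^{n+1}(ℱ_{n+1}) with {O^n(U) ∈ 𝒪^n(ℱ_n) : O^{n+1}(U) ∈ ℍ} ∈ τ_n. Then the topology t_{ℱ_{n+1}}(τ_{n+1}) on C(Y,Z) is contained in the topology t_{ℱ_n}(τ_n). -/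
open TopologicalSpace Set Topology

universe u v w

/-- Iterated stage types: `Stage Y 0 = 𝒪(Y)` and `Stage Y (k+1)` is the type in which the
level-`(k+1)` objects `O^{k+1}(U)` live. -/
@[reducible] def Stage (Y : Type u) [TopologicalSpace Y] : ℕ → Type u
  | 0 => Opens Y
  | k + 1 => Set (Set (Stage Y k))

/-- `famO F k U` is `O^{k+1}(U)`, where the family `ℱ_{k+1}` is `F k`.
So `famO F 0 U = O¹(U) = {φ ∈ ℱ₁ : U ∈ φ}` and
`famO F (k+1) U = O^{k+2}(U) = {φ ∈ ℱ_{k+2} : O^{k+1}(U) ∈ φ}`. -/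
def famO {Y : Type u} [TopologicalSpace Y] (F : ∀ k, Set (Set (Stage Y k))) :
    ∀ k, Opens Y → Stage Y (k + 1)
  | 0, U => {φ ∈ F 0 | U ∈ φ}
  | k + 1, U => {φ ∈ F (k + 1) | famO F k U ∈ φ}

variable {Y : Type u} [TopologicalSpace Y]

/-- The set `𝒪^{m+1}(ℱ_{m+1}) = {O^{m+1}(U) : U ∈ 𝒪(Y)}`, as a type. -/
abbrev OmegaN (F : ∀ k, Set (Set (Stage Y k))) (m : ℕ) : Type u :=
  {s : Stage Y (m + 1) // s ∈ Set.range (famO F m)}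

/-- The map `Φ_{ℱ_{m+1}} : 𝒪(Y) → 𝒪^{m+1}(ℱ_{m+1})`, `U ↦ O^{m+1}(U)`. -/
def onMap (F : ∀ k, Set (Set (Stage Y k))) (m : ℕ) (U : Opens Y) : OmegaN F m :=
  ⟨famO F m U, Set.mem_range_self U⟩

/-- The `ℱ_{m+1}(τ)`-family-open topology `t_{ℱ_{m+1}}(τ)` on `C(Y, Z)`: it is generated by the
subbasic sets `⟨ℍ, U⟩ = {f ∈ C(Y,Z) : O^{m+1}(f⁻¹(U)) ∈ ℍ}`, `ℍ ∈ τ`, `U ∈ 𝒪(Z)`. -/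
def famTop (Z : Type v) [TopologicalSpace Z] {Y : Type u} [TopologicalSpace Y]
    (F : ∀ k, Set (Set (Stage Y k))) (m : ℕ)
    (τ : TopologicalSpace (OmegaN F m)) : TopologicalSpace C(Y, Z) :=
  TopologicalSpace.generateFrom
    {S | ∃ (H : Set (OmegaN F m)) (U : Opens Z), IsOpen[τ] H ∧
      S = {f : C(Y, Z) | onMap F m (Opens.comap f U) ∈ H}}

/-- The transition map `𝒪^{m+1}(ℱ_{m+1}) → 𝒪^{m+2}(ℱ_{m+2})`, `O^{m+1}(U) ↦ O^{m+2}(U)`. It is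
well defined because `O^{m+2}(U)` depends on `U` only through `O^{m+1}(U)`, and the topology `τ'` of
`stmt1` is the one coinduced by it. -/
def transitionMap (F : ∀ k, Set (Set (Stage Y k))) (m : ℕ) (s : OmegaN F m) : OmegaN F (m + 1) :=
  ⟨{φ ∈ F (m + 1) | s.1 ∈ φ}, by
    obtain ⟨_, U, rfl⟩ := s
    exact ⟨U, rfl⟩⟩

theorem transitionMap_onMap (F : ∀ k, Set (Set (Stage Y k))) (m : ℕ) (U : Opens Y) :
    transitionMap F m (onMap F m U) = onMap F (m + 1) U :=
  rfl

theorem transitionMap_preimage (F : ∀ k, Set (Set (Stage Y k))) (m : ℕ)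
    (H : Set (OmegaN F (m + 1))) :
    transitionMap F m ⁻¹' H =
      {s | ∃ U : Opens Y, famO F m U = s.1 ∧ onMap F (m + 1) U ∈ H} := by
  ext s
  constructor
  · obtain ⟨_, U, rfl⟩ := s
    exact fun hU => ⟨U, rfl, hU⟩
  · rintro ⟨U, hUs, hU⟩
    obtain rfl : onMap F m U = s := Subtype.ext hUs
    exact hU

theorem isOpen_famTop_setOf_onMap_comap_mem (Z : Type v) [TopologicalSpace Z]
    (F : ∀ k, Set (Set (Stage Y k))) (m : ℕ) {τ : TopologicalSpace (OmegaN F m)}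
    {H : Set (OmegaN F m)} (hH : IsOpen[τ] H) (U : Opens Z) :
    IsOpen[famTop Z F m τ] {f : C(Y, Z) | onMap F m (Opens.comap f U) ∈ H} :=
  isOpen_generateFrom_of_mem ⟨H, U, hH, rfl⟩

theorem stmt1_general (Z : Type v) [TopologicalSpace Z] {F G : ∀ k, Set (Set (Stage Y k))}
    {k l : ℕ} {τ : TopologicalSpace (OmegaN F k)} {σ : TopologicalSpace (OmegaN G l)}
    {T : OmegaN F k → OmegaN G l} (hT : Continuous[τ, σ] T)
    (hT_onMap : ∀ U, T (onMap F k U) = onMap G l U) :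
    famTop Z F k τ ≤ famTop Z G l σ := by
  refine le_generateFrom ?_
  rintro _ ⟨H, U, hH, rfl⟩
  simpa only [mem_preimage, hT_onMap] using
    isOpen_famTop_setOf_onMap_comap_mem Z F k (hT.isOpen_preimage H hH) U

/-- With `τ'` the topology on `𝒪^{n+1}(ℱ_{n+1})` induced from `τ` on `𝒪^n(ℱ_n)`, the topology
`t_{ℱ_{n+1}}(τ')` on `C(Y,Z)` is contained in `t_{ℱ_n}(τ)` (here `n = m + 1`). -/
theorem stmt1 (Z : Type v) [TopologicalSpace Z] (F : ∀ k, Set (Set (Stage Y k)))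
    (hF : ∀ k, ∀ φ ∈ F (k + 1), ∀ x ∈ φ, x ∈ Set.range (famO F k))
    (m : ℕ) (τ : TopologicalSpace (OmegaN F m)) (τ' : TopologicalSpace (OmegaN F (m + 1)))
    (hτ' : ∀ H : Set (OmegaN F (m + 1)),
      IsOpen[τ'] H ↔
        IsOpen[τ] {s : OmegaN F m |
          ∃ U : Opens Y, famO F m U = s.1 ∧ onMap F (m + 1) U ∈ H}) :
    ∀ S : Set C(Y, Z), IsOpen[famTop Z F (m + 1) τ'] S → IsOpen[famTop Z F m τ] S := by
  have hT : Continuous[τ, τ'] (transitionMap F m) :=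
    continuous_def.2 fun H hH => transitionMap_preimage F m H ▸ (hτ' H).1 hH
  exact stmt1_general Z hT (transitionMap_onMap F m)
end

section
/- Let τ_n be a topology on 𝒪^n(ℱ_n), let ℱ_{n+1} ⊆ 𝒫(𝒪^n(ℱ_n)), and let τ_{n+1} be the topology on 𝒪^{n+1}(ℱ_{n+1}) consisting of all ℍ ⊆ 𝒪^{n+1}(ℱ_{n+1}) with {O^n(U) ∈ 𝒪^n(ℱ_n) : O^{n+1}(U) ∈ ℍ} ∈ τ_n. If the topology t_{ℱ_{n+1}}(τ_{n+1}) on C(Y,Z) is jointly continuous, then the topology t_{ℱ_n}(τ_n) on C(Y,Z) is jointly continuous. -/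
open TopologicalSpace Set Topology

universe u v w

variable {Y : Type u} [TopologicalSpace Y]

/-- A topology `t` on `C(Y, Z)` is jointly continuous if for every topological space `X`,
continuity of `G : X → C_t(Y, Z)` implies continuity of `G̃ : X × Y → Z`, `G̃(x,y) = G(x)(y)`. -/
def IsJointlyContinuousTop {Y : Type u} {Z : Type v} [TopologicalSpace Y] [TopologicalSpace Z]
    (t : TopologicalSpace C(Y, Z)) : Prop :=
  ∀ (X : Type w) [tX : TopologicalSpace X] (G : X → C(Y, Z)),
    Continuous[tX, t] G → Continuous fun p : X × Y => G p.1 p.2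

/-!
The set `O^{n+1}(U)` is determined by `O^n(U)`, so there is a map `O^n(U) ↦ O^{n+1}(U)` compatible
with the projections from `𝒪(Y)`, and `τ_{n+1}` is its final topology. Pulled back to `𝒪(Y)`,
`τ_n` is therefore finer than `τ_{n+1}`. A family-open topology depends only on this pullback, and
monotonically, so `t_{ℱ_n}(τ_n)` is finer than `t_{ℱ_{n+1}}(τ_{n+1})`; joint continuity passes to
finer topologies.
-/

namespace OmegaN

/-- The bonding map `O^{m+1}(U) ↦ O^{m+2}(U)` from `𝒪^{m+1}(ℱ_{m+1})` to `𝒪^{m+2}(ℱ_{m+2})`, written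
without choosing a representative `U`. -/
def next (F : ∀ k, Set (Set (Stage Y k))) (m : ℕ) (s : OmegaN F m) : OmegaN F (m + 1) :=
  ⟨{φ ∈ F (m + 1) | s.1 ∈ φ}, by
    obtain ⟨_, U, rfl⟩ := s
    exact ⟨U, rfl⟩⟩

theorem next_comp_onMap (F : ∀ k, Set (Set (Stage Y k))) (m : ℕ) :
    next F m ∘ onMap F m = onMap F (m + 1) :=
  rfl

theorem preimage_next (F : ∀ k, Set (Set (Stage Y k))) (m : ℕ) (H : Set (OmegaN F (m + 1))) :
    next F m ⁻¹' H = {s | ∃ U : Opens Y, famO F m U = s.1 ∧ onMap F (m + 1) U ∈ H} := by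
  ext s
  constructor
  · obtain ⟨_, U, rfl⟩ := s
    exact fun hU => ⟨U, rfl, hU⟩
  · rintro ⟨U, hU, hUH⟩
    obtain rfl : onMap F m U = s := Subtype.ext hU
    exact hUH

theorem induced_onMap_le_induced_onMap_succ {F : ∀ k, Set (Set (Stage Y k))} {m : ℕ}
    {τ : TopologicalSpace (OmegaN F m)} {τ' : TopologicalSpace (OmegaN F (m + 1))}
    (hnext : Continuous[τ, τ'] (next F m)) :
    τ.induced (onMap F m) ≤ τ'.induced (onMap F (m + 1)) := by
  rw [← next_comp_onMap, ← induced_compose]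
  exact induced_mono hnext.le_induced

end OmegaN

section FamTop

variable {Z : Type v} [TopologicalSpace Z] {F G : ∀ k, Set (Set (Stage Y k))} {m n : ℕ}
  {τ : TopologicalSpace (OmegaN F m)} {τ' : TopologicalSpace (OmegaN G n)}

theorem famTop_eq_iInf_induced :
    famTop Z F m τ =
      ⨅ U : Opens Z, (τ.induced (onMap F m)).induced fun f : C(Y, Z) => Opens.comap f U := by
  refine le_antisymm (le_iInf fun U => ?_) (le_generateFrom ?_)
  · rw [induced_compose]
    rintro _ ⟨H, hH, rfl⟩
    exact isOpen_generateFrom_of_mem ⟨H, U, hH, rfl⟩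
  · rintro _ ⟨H, U, hH, rfl⟩
    have hopen : IsOpen[(τ.induced (onMap F m)).induced fun f : C(Y, Z) => Opens.comap f U]
        {f | onMap F m (Opens.comap f U) ∈ H} :=
      ⟨onMap F m ⁻¹' H, ⟨H, hH, rfl⟩, rfl⟩
    exact hopen.mono (iInf_le _ U)

theorem famTop_le_famTop (h : τ.induced (onMap F m) ≤ τ'.induced (onMap G n)) :
    famTop Z F m τ ≤ famTop Z G n τ' := by
  rw [famTop_eq_iInf_induced, famTop_eq_iInf_induced]
  exact iInf_mono fun _ => induced_mono h

theorem IsJointlyContinuousTop.of_le {t t' : TopologicalSpace C(Y, Z)}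
    (ht' : IsJointlyContinuousTop.{u, v, w} t') (h : t ≤ t') :
    IsJointlyContinuousTop.{u, v, w} t :=
  fun X _ f hf => ht' X f (continuous_le_rng h hf)

theorem stmt3_general (h : τ.induced (onMap F m) ≤ τ'.induced (onMap G n))
    (hjc : IsJointlyContinuousTop.{u, v, w} (famTop Z G n τ')) :
    IsJointlyContinuousTop.{u, v, w} (famTop Z F m τ) :=
  hjc.of_le (famTop_le_famTop h)

end FamTop

/-- With `τ'` the topology on `𝒪^{n+1}(ℱ_{n+1})` induced from `τ` on `𝒪^n(ℱ_n)`: if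
`t_{ℱ_{n+1}}(τ')` is jointly continuous then so is `t_{ℱ_n}(τ)` (here `n = m + 1`). -/
theorem stmt3 (Z : Type v) [TopologicalSpace Z] (F : ∀ k, Set (Set (Stage Y k)))
    (hF : ∀ k, ∀ φ ∈ F (k + 1), ∀ x ∈ φ, x ∈ Set.range (famO F k))
    (m : ℕ) (τ : TopologicalSpace (OmegaN F m)) (τ' : TopologicalSpace (OmegaN F (m + 1)))
    (hτ' : ∀ H : Set (OmegaN F (m + 1)),
      IsOpen[τ'] H ↔
        IsOpen[τ] {s : OmegaN F m |
          ∃ U : Opens Y, famO F m U = s.1 ∧ onMap F (m + 1) U ∈ H})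
    (hjc : IsJointlyContinuousTop.{u, v, w} (famTop Z F (m + 1) τ')) :
    IsJointlyContinuousTop.{u, v, w} (famTop Z F m τ) := by
  have hnext : Continuous[τ, τ'] (OmegaN.next F m) :=
    continuous_def.2 fun H hH => OmegaN.preimage_next F m H ▸ (hτ' H).1 hH
  exact stmt3_general (OmegaN.induced_onMap_le_induced_onMap_succ hnext) hjc
end

section
/- Let τ_n be a topology on the set 𝒪^n(ℱ_n), where Y and the Sierpiński space 𝐒 are as in the context. Then the mapping h_n : C_{t_{ℱ_n}(τ_n)}(Y, 𝐒) → (𝒪^n(ℱ_n), τ_n) defined by h_n(f) = O^n(f⁻¹({1})) is continuous, open, and onto. -/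
open TopologicalSpace Set Topology

universe u v w

variable {Y : Type u} [TopologicalSpace Y]

/-- The map `h_{m+1} : C(Y, 𝐒) → 𝒪^{m+1}(ℱ_{m+1})`, `h(f) = O^{m+1}(f⁻¹({1}))`, where the
Sierpiński space `𝐒` is realised as `Prop` (with `1 = True`, whose singleton is the nontrivial
open set). -/
def sierH {Y : Type u} [TopologicalSpace Y] (F : ∀ k, Set (Set (Stage Y k))) (m : ℕ) :
    C(Y, Prop) → OmegaN F m :=
  fun f => onMap F m ⟨f ⁻¹' {True}, f.continuous.isOpen_preimage _ isOpen_singleton_true⟩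

/-! Every open subset of `Prop` is `∅`, `{True}` or everything. For the two extreme choices of `U`
the preimage `f⁻¹(U)` does not depend on `f`, so only `U = {True}` contributes, and the family-open
topology on `C(Y, Prop)` is the one induced by `f ↦ O^n(f⁻¹({True}))`. This map is onto, because
`f ↦ f⁻¹({True})` is onto `Opens Y`, and a surjection is continuous and open for the topology it
induces. -/

/-- The `Φ`-open topology on `C(Y, Z)` for an arbitrary map `Φ : Opens Y → X`: its subbasic sets are
`{f | Φ (f⁻¹(U)) ∈ H}` with `H` open in `(X, τ)` and `U` open in `Z`. The family-open topology
`famTop Z F m τ` is the case `Φ = onMap F m`. -/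
abbrev mapOpenTopology (Z : Type*) [TopologicalSpace Z] {X : Type*} (Φ : Opens Y → X)
    (τ : TopologicalSpace X) : TopologicalSpace C(Y, Z) :=
  generateFrom {S | ∃ (H : Set X) (U : Opens Z), IsOpen[τ] H ∧
    S = {f : C(Y, Z) | Φ (Opens.comap f U) ∈ H}}

/-- The open point `{1}` of the Sierpiński space `Prop`, as an open set; the preimage `f⁻¹({1})`
which classifies `f : C(Y, Prop)` is `Opens.comap f openPoint`. -/
def openPoint : Opens Prop :=
  ⟨{True}, isOpen_singleton_true⟩

theorem mapOpenTopology_eq_iInf_induced {Z X : Type*} [TopologicalSpace Z] (Φ : Opens Y → X)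
    (τ : TopologicalSpace X) :
    mapOpenTopology Z Φ τ = ⨅ U : Opens Z, τ.induced fun f => Φ (Opens.comap f U) := by
  rw [← generateFrom_iUnion_isOpen, mapOpenTopology]
  congr 1
  ext S
  simp only [mem_ofPred_eq, mem_iUnion, isOpen_induced_iff]
  constructor
  · rintro ⟨H, U, hH, rfl⟩
    exact ⟨U, H, hH, rfl⟩
  · rintro ⟨U, H, hH, rfl⟩
    exact ⟨H, U, hH, rfl⟩

theorem opens_prop_eq_top_of_false_mem {U : Opens Prop} (hU : False ∈ U) : U = ⊤ := by
  have hnhds : (U : Set Prop) ∈ 𝓝 False := U.isOpen.mem_nhds hU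
  rw [nhds_false, Filter.mem_top] at hnhds
  exact Opens.ext hnhds

theorem opens_prop_eq_bot_or_openPoint_or_top (U : Opens Prop) :
    U = ⊥ ∨ U = openPoint ∨ U = ⊤ := by
  by_cases hFalse : False ∈ U
  · exact .inr (.inr (opens_prop_eq_top_of_false_mem hFalse))
  · by_cases hTrue : True ∈ U
    · refine .inr (.inl (Opens.ext (Set.ext fun p => ?_)))
      by_cases hp : p <;> simp [openPoint, hp, hFalse, hTrue]
    · refine .inl (Opens.ext (Set.ext fun p => ?_))
      by_cases hp : p <;> simp [hp, hFalse, hTrue]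

theorem comap_openPoint_surjective :
    Function.Surjective fun f : C(Y, Prop) => Opens.comap f openPoint := by
  intro U
  refine ⟨⟨(· ∈ U), continuous_Prop.2 U.isOpen⟩, ?_⟩
  ext y
  simp [openPoint]

theorem mapOpenTopology_prop_eq_induced {X : Type*} (Φ : Opens Y → X) (τ : TopologicalSpace X) :
    mapOpenTopology Prop Φ τ = τ.induced fun f => Φ (Opens.comap f openPoint) := by
  rw [mapOpenTopology_eq_iInf_induced]
  refine le_antisymm (iInf_le _ openPoint) (le_iInf fun U => ?_)
  obtain rfl | rfl | rfl := opens_prop_eq_bot_or_openPoint_or_top U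
  · have hbot (f : C(Y, Prop)) : Opens.comap f ⊥ = ⊥ := rfl
    simp only [hbot, induced_const, le_top]
  · exact le_rfl
  · have htop (f : C(Y, Prop)) : Opens.comap f ⊤ = ⊤ := rfl
    simp only [htop, induced_const, le_top]

theorem onMap_surjective (F : ∀ k, Set (Set (Stage Y k))) (m : ℕ) :
    Function.Surjective (onMap F m) := by
  rintro ⟨_, U, rfl⟩
  exact ⟨U, rfl⟩

theorem stmt4_general {X : Type*} {Φ : Opens Y → X} (hΦ : Function.Surjective Φ)
    (τ : TopologicalSpace X) :
    let h : C(Y, Prop) → X := fun f => Φ (Opens.comap f openPoint)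
    Continuous[mapOpenTopology Prop Φ τ, τ] h ∧
    @IsOpenMap C(Y, Prop) X (mapOpenTopology Prop Φ τ) τ h ∧
    Function.Surjective h := by
  intro h
  let : TopologicalSpace C(Y, Prop) := mapOpenTopology Prop Φ τ
  have hinducing : IsInducing h := ⟨mapOpenTopology_prop_eq_induced Φ τ⟩
  have hsurj : Function.Surjective h := hΦ.comp comap_openPoint_surjective
  exact ⟨hinducing.continuous, hinducing.isOpenMap (hsurj.range_eq ▸ isOpen_univ), hsurj⟩

/-- The map `h_n : C_{t_{ℱ_n}(τ)}(Y, 𝐒) → (𝒪^n(ℱ_n), τ)`, `h_n(f) = O^n(f⁻¹({1}))`, is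
continuous, open and onto (here `n = m + 1`). -/
theorem stmt4 (F : ∀ k, Set (Set (Stage Y k)))
    (hF : ∀ k, ∀ φ ∈ F (k + 1), ∀ x ∈ φ, x ∈ Set.range (famO F k))
    (m : ℕ) (τ : TopologicalSpace (OmegaN F m)) :
    Continuous[famTop Prop F m τ, τ] (sierH F m) ∧
    @IsOpenMap C(Y, Prop) (OmegaN F m) (famTop Prop F m τ) τ (sierH F m) ∧
    Function.Surjective (sierH F m) :=
  stmt4_general (onMap_surjective F m) τ
end

section
/- Let τ_n be a topology on the set 𝒪^n(ℱ_n). If the map Φ_{ℱ_n} : 𝒪(Y) → 𝒪^n(ℱ_n), Φ_{ℱ_n}(U) = O^n(U), is one-to-one, then the mapping h_n : C_{t_{ℱ_n}(τ_n)}(Y, 𝐒) → (𝒪^n(ℱ_n), τ_n) defined by h_n(f) = O^n(f⁻¹({1})) is a homeomorphism. -/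
open TopologicalSpace Set Topology

universe u v w

variable {Y : Type u} [TopologicalSpace Y]

/-- The open set `{1}` of the Sierpiński space `Prop`, whose preimages classify open sets. -/
def openTrue : Opens Prop := ⟨{True}, isOpen_singleton_true⟩

theorem opens_prop_eq_bot_or_openTrue_or_top (U : Opens Prop) :
    U = ⊥ ∨ U = openTrue ∨ U = ⊤ := by
  by_cases hFalse : False ∈ U
  · have hU : (U : Set Prop) ∈ 𝓝 False := U.isOpen.mem_nhds hFalse
    rw [nhds_false, Filter.mem_top] at hU
    exact .inr (.inr (Opens.ext hU))
  by_cases hTrue : True ∈ U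
  · refine .inr (.inl ?_)
    ext p
    by_cases hp : p <;> simp [openTrue, hp, hFalse, hTrue]
  · refine .inl ?_
    ext p
    by_cases hp : p <;> simp [hp, hFalse, hTrue]

/-- The correspondence `f ↦ f⁻¹({1})` between continuous maps into the Sierpiński space and open
sets; its inverse sends an open set to its characteristic map. -/
def sierpinskiEquivOpens (Y : Type u) [TopologicalSpace Y] : C(Y, Prop) ≃ Opens Y where
  toFun f := Opens.comap f openTrue
  invFun U := ⟨(· ∈ U), continuous_Prop.2 U.isOpen⟩
  left_inv f := by ext y; simp [openTrue]
  right_inv U := by ext y; simp [openTrue]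

section PreimageTopology

variable {X : Type w} (τ : TopologicalSpace X) (Φ : Opens Y → X)

/-- The coarsest topology on `C(Y, Z)` making all the maps `f ↦ Φ (f⁻¹(U))`, for `U` open in `Z`,
continuous. The family-open topologies are the case where `Φ` is `U ↦ O^n(U)`. -/
abbrev preimageTopology (Z : Type v) [TopologicalSpace Z] : TopologicalSpace C(Y, Z) :=
  ⨅ U : Opens Z, τ.induced fun f ↦ Φ (Opens.comap f U)

-- The preimages of `⊥` and `⊤` do not depend on `f`, so only the open set `{1}` contributes.
theorem preimageTopology_prop_eq_induced :
    preimageTopology τ Φ Prop = τ.induced (Φ ∘ sierpinskiEquivOpens Y) := by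
  refine le_antisymm (iInf_le _ openTrue) (le_iInf fun U ↦ ?_)
  obtain rfl | rfl | rfl := opens_prop_eq_bot_or_openTrue_or_top U
  · simp only [map_bot, induced_const, le_top]
  · exact le_rfl
  · simp only [map_top, induced_const, le_top]

theorem stmt5_general :
    @IsHomeomorph C(Y, Prop) X (preimageTopology τ Φ Prop) τ (Φ ∘ sierpinskiEquivOpens Y) ↔
      Function.Bijective Φ := by
  let := preimageTopology τ Φ Prop
  have inducing : IsInducing (Φ ∘ sierpinskiEquivOpens Y) := ⟨preimageTopology_prop_eq_induced τ Φ⟩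
  rw [isHomeomorph_iff_isEmbedding_surjective, isEmbedding_iff, and_iff_right inducing]
  exact Function.Bijective.of_comp_iff Φ (sierpinskiEquivOpens Y).bijective

end PreimageTopology

theorem famTop_eq_preimageTopology (Z : Type v) [TopologicalSpace Z]
    (F : ∀ k, Set (Set (Stage Y k))) (m : ℕ) (τ : TopologicalSpace (OmegaN F m)) :
    famTop Z F m τ = preimageTopology τ (onMap F m) Z := by
  refine le_antisymm (le_iInf fun U ↦ ?_) (le_generateFrom ?_)
  · rintro _ ⟨H, hH, rfl⟩
    exact isOpen_generateFrom_of_mem ⟨H, U, hH, rfl⟩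
  · rintro _ ⟨H, U, hH, rfl⟩
    have hle : preimageTopology τ (onMap F m) Z ≤ τ.induced fun f ↦ onMap F m (Opens.comap f U) :=
      iInf_le _ U
    exact hle _ ⟨H, hH, rfl⟩

/-- If the map `Φ_{ℱ_n} : 𝒪(Y) → 𝒪^n(ℱ_n)`, `U ↦ O^n(U)`, is one-to-one, then
`h_n : C_{t_{ℱ_n}(τ)}(Y, 𝐒) → (𝒪^n(ℱ_n), τ)`, `h_n(f) = O^n(f⁻¹({1}))`, is a homeomorphism
(here `n = m + 1`). -/
theorem stmt5 (F : ∀ k, Set (Set (Stage Y k)))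
    (hF : ∀ k, ∀ φ ∈ F (k + 1), ∀ x ∈ φ, x ∈ Set.range (famO F k))
    (m : ℕ) (τ : TopologicalSpace (OmegaN F m))
    (hinj : Function.Injective (onMap F m)) :
    @IsHomeomorph C(Y, Prop) (OmegaN F m) (famTop Prop F m τ) τ (sierH F m) := by
  rw [famTop_eq_preimageTopology]
  exact (stmt5_general τ (onMap F m)).2 ⟨hinj, onMap_surjective F m⟩
end

section
/- Let ℱ₁ be a subset of the Scott topology τ_Sc(𝒪(Y)). Then the map Φ_{ℱ₁} : 𝒪(Y) → 𝒪¹(ℱ₁), Φ_{ℱ₁}(U) = O¹(U), is Scott continuous, i.e., continuous when 𝒪(Y) and 𝒪¹(ℱ₁) each carry the Scott topology induced by the inclusion order. -/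
open TopologicalSpace Set Topology

universe u v w

/-- A subset of a poset is Scott open if it is an upper set and every directed set whose
supremum lies in it meets it. -/
def ScottOpen {P : Type*} [Preorder P] (H : Set P) : Prop :=
  IsUpperSet H ∧ ∀ D : Set P, D.Nonempty → DirectedOn (· ≤ ·) D →
    ∀ a : P, IsLUB D a → a ∈ H → (D ∩ H).Nonempty

/-- The Scott topology on a poset: the Scott open sets form a topology, so the topology
generated by them has exactly the Scott open sets as its open sets. -/
def scottTop (P : Type*) [Preorder P] : TopologicalSpace P :=
  TopologicalSpace.generateFrom {H : Set P | ScottOpen H}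

/-- `O¹(U) = {φ ∈ ℱ₁ : U ∈ φ}`. -/
def O1 {Y : Type u} [TopologicalSpace Y] (F1 : Set (Set (Opens Y))) (U : Opens Y) :
    Set (Set (Opens Y)) :=
  {φ ∈ F1 | U ∈ φ}

variable {Y : Type u} [TopologicalSpace Y]

/-- The set `𝒪¹(ℱ₁) = {O¹(U) : U ∈ 𝒪(Y)}`, as a type. -/
abbrev Omega1 (F1 : Set (Set (Opens Y))) : Type u :=
  {s : Set (Set (Opens Y)) // s ∈ Set.range (O1 F1)}

section ScottTopology

variable {P Q : Type*} [Preorder P] [Preorder Q]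

theorem isOpen_scott_iff_scottOpen {H : Set P} : IsOpen[scott P univ] H ↔ ScottOpen H := by
  let : TopologicalSpace P := scott P univ
  have : IsScott P univ := ⟨rfl⟩
  rw [IsScott.isOpen_iff_isUpperSet_and_dirSupInaccOn (D := univ), dirSupInaccOn_univ]
  rfl

theorem scottTop_eq_scott : scottTop P = scott P univ := by
  simp only [scottTop, ← isOpen_scott_iff_scottOpen, generateFrom_setOfPred_isOpen]

theorem continuous_scottTop_iff {f : P → Q} :
    Continuous[scottTop P, scottTop Q] f ↔ ScottContinuous f := by
  let : TopologicalSpace P := scottTop P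
  let : TopologicalSpace Q := scottTop Q
  have : IsScott P univ := ⟨scottTop_eq_scott⟩
  have : IsScott Q univ := ⟨scottTop_eq_scott⟩
  rw [← scottContinuousOn_univ, IsScott.scottContinuousOn_iff_continuous fun _ _ _ ↦ mem_univ _]

theorem scottContinuous_rangeFactorization {f : P → Q} (hf : ScottContinuous f) :
    ScottContinuous (rangeFactorization f) := by
  intro D hne hD a ha
  refine IsLUB.of_image (f := Subtype.val) Iff.rfl ?_
  rw [← image_comp]
  exact hf hne hD ha

theorem scottContinuous_setOf_mem {F : Set (Set P)} (hF : ∀ φ ∈ F, ScottOpen φ) :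
    ScottContinuous fun x : P ↦ {φ ∈ F | x ∈ φ} := by
  intro D hne hD a ha
  constructor
  · rintro _ ⟨x, hx, rfl⟩ φ ⟨hφ, hxφ⟩
    exact ⟨hφ, (hF φ hφ).1 (ha.1 hx) hxφ⟩
  · rintro S hS φ ⟨hφ, haφ⟩
    obtain ⟨x, hx, hxφ⟩ := (hF φ hφ).2 D hne hD a ha haφ
    exact hS (mem_image_of_mem _ hx) ⟨hφ, hxφ⟩

theorem stmt18_general (F : Set (Set P)) (hF : ∀ φ ∈ F, ScottOpen φ) :
    Continuous[scottTop P, scottTop (range fun x : P ↦ {φ ∈ F | x ∈ φ})]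
      (rangeFactorization fun x : P ↦ {φ ∈ F | x ∈ φ}) :=
  continuous_scottTop_iff.2 (scottContinuous_rangeFactorization (scottContinuous_setOf_mem hF))

end ScottTopology

/-- If `ℱ₁ ⊆ τ_Sc(𝒪(Y))`, then the map `Φ_{ℱ₁} : 𝒪(Y) → 𝒪¹(ℱ₁)`, `U ↦ O¹(U)`, is Scott
continuous (both posets being ordered by inclusion). -/
theorem stmt18 (F1 : Set (Set (Opens Y))) (hF1 : ∀ φ ∈ F1, ScottOpen φ) :
    Continuous[scottTop (Opens Y), scottTop (Omega1 F1)]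
      fun U : Opens Y => (⟨O1 F1 U, Set.mem_range_self U⟩ : Omega1 F1) :=
  stmt18_general F1 hF1
end
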